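/- Let up be an update over a finite set X of clocks and G a set of atomic constraints. For all valuations v, v' with up(v) ≥ 0 and up(v') ≥ 0: if v ⊑_{wp(⊑_G, up)} v' then up(v) ⊑_G up(v'). -/

import Mathlib

open scoped NNReal

/-! ## Atomic constraints over a set of clocks -/

/-- Comparison operator `◁ ∈ {<, ≤}`. -/
inductive Ineq : Type where
  | lt : Ineq
  | le : Ineq
deriving DecidableEq

/-- Interpretation of a comparison operator on reals. -/
def Ineq.holds : Ineq → ℝ → ℝ → Prop
  | .lt, a, b => a < b
  | .le, a, b => a ≤ b

/-- Atomic constraints over clocks `X`: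
`upper x o c` is `x ◁ c` (c ∈ ℕ), `lower c o x` is `c ◁ x` (c ∈ ℕ),
`diag x y o d` is `x - y ◁ d` (d ∈ ℤ). -/
inductive Constr (X : Type) : Type where
  | upper : X → Ineq → ℕ → Constr X
  | lower : ℕ → Ineq → X → Constr X
  | diag : X → X → Ineq → ℤ → Constr X
deriving DecidableEq

namespace Constr

/-- Is the constraint a diagonal constraint `x - y ◁ d`? -/
def isDiag {X : Type} : Constr X → Bool
  | .diag _ _ _ _ => true
  | _ => false

/-- The integer constant of a constraint. -/
def constOf {X : Type} : Constr X → ℤ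
  | .upper _ _ c => (c : ℤ)
  | .lower c _ _ => (c : ℤ)
  | .diag _ _ _ d => d

/-- Satisfaction of a constraint by a clock valuation `v : X → ℝ≥0`. -/
def sat {X : Type} (v : X → ℝ≥0) : Constr X → Prop
  | .upper x o c => o.holds (v x : ℝ) (c : ℝ)
  | .lower c o x => o.holds (c : ℝ) (v x : ℝ)
  | .diag x y o d => o.holds ((v x : ℝ) - (v y : ℝ)) (d : ℝ)

end Constr

/-- Time elapse: `v + δ`. -/
def shift {X : Type} (v : X → ℝ≥0) (δ : ℝ≥0) : X → ℝ≥0 := fun x => v x + δ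

/-- The relation `v ⊑_G v'`: for all `φ ∈ G` and all delays `δ ≥ 0`,
`v + δ ⊨ φ` implies `v' + δ ⊨ φ`. -/
def simG {X : Type} (G : Set (Constr X)) (v v' : X → ℝ≥0) : Prop :=
  ∀ φ ∈ G, ∀ δ : ℝ≥0, Constr.sat (shift v δ) φ → Constr.sat (shift v' δ) φ

/-- `Z ⊑_G Z'` on sets of valuations. -/
def simGZ {X : Type} (G : Set (Constr X)) (Z Z' : Set (X → ℝ≥0)) : Prop :=
  ∀ v ∈ Z, ∃ v' ∈ Z', simG G v v'

open Classical in
/-- `[R]v`: reset the clocks in `R` to `0`. -/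
noncomputable def reset {X : Type} (R : Set X) (v : X → ℝ≥0) : X → ℝ≥0 :=
  fun x => if x ∈ R then 0 else v x

/-- Weakest precondition `wp(⊑_φ, R)` of a single constraint over a reset. -/
def wpReset {X : Type} (R : Set X) : Constr X → Set (Constr X)
  | .upper x o c => {ψ | x ∉ R ∧ ψ = .upper x o c}
  | .lower c o x => {ψ | x ∉ R ∧ ψ = .lower c o x}
  | .diag x y o d =>
      {ψ | (x ∉ R ∧ y ∉ R ∧ ψ = .diag x y o d) ∨
           (x ∉ R ∧ y ∈ R ∧ 0 ≤ d ∧ ψ = .upper x o d.toNat) ∨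
           (x ∈ R ∧ y ∉ R ∧ 0 ≤ -d ∧ ψ = .lower (-d).toNat o y)}

/-- Weakest precondition `wp(⊑_G, R)` of a set of constraints over a reset. -/
def wpResetSet {X : Type} (R : Set X) (G : Set (Constr X)) : Set (Constr X) :=
  ⋃ φ ∈ G, wpReset R φ

/-! ## Timed automata -/

/-- A transition: source state, guard (finite conjunction of constraints),
reset set, target state. -/
abbrev TTrans (Q X : Type) : Type := Q × Finset (Constr X) × Set X × Q

def TTrans.src {Q X : Type} (t : TTrans Q X) : Q := t.1
def TTrans.grd {Q X : Type} (t : TTrans Q X) : Finset (Constr X) := t.2.1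
def TTrans.rst {Q X : Type} (t : TTrans Q X) : Set X := t.2.2.1
def TTrans.tgt {Q X : Type} (t : TTrans Q X) : Q := t.2.2.2

/-- A timed automaton. -/
structure TA (Q X : Type) : Type where
  init : Q
  trans : Finset (TTrans Q X)
  acc : Set Q

/-- Action step of a timed automaton along transition `t`. -/
def Step {Q X : Type} (A : TA Q X) (t : TTrans Q X) (c c' : Q × (X → ℝ≥0)) : Prop :=
  t ∈ A.trans ∧ TTrans.src t = c.1 ∧ (∀ φ ∈ TTrans.grd t, Constr.sat c.2 φ) ∧
    c'.1 = TTrans.tgt t ∧ c'.2 = reset (TTrans.rst t) c.2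

/-- `r` is a simulation on the configurations of `A`: a reflexive transitive
relation, relating only configurations with equal states, compatible with
delays and action transitions. -/
def IsSimulation {Q X : Type} (A : TA Q X)
    (r : (Q × (X → ℝ≥0)) → (Q × (X → ℝ≥0)) → Prop) : Prop :=
  Reflexive r ∧ Transitive r ∧
  ∀ q v q' v', r (q, v) (q', v') →
    q = q' ∧
    (∀ δ : ℝ≥0, ∃ δ' : ℝ≥0, r (q, shift v δ) (q, shift v' δ')) ∧
    (∀ t c₁, Step A t (q, v) c₁ →
      ∃ v₁', Step A t (q, v') (c₁.1, v₁') ∧ r c₁ (c₁.1, v₁'))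

/-- The state-based guard equations:
`G(q) = ⋃_{(q,g,R,q₁) ∈ T} ({g} ∪ wp(⊑_{G(q₁)}, R))`. -/
def GuardEq {Q X : Type} (A : TA Q X) (G : Q → Set (Constr X)) : Prop :=
  ∀ q, G q = ⋃ t ∈ A.trans, ⋃ (_ : TTrans.src t = q),
    ((TTrans.grd t : Set (Constr X)) ∪ wpResetSet (TTrans.rst t) (G (TTrans.tgt t)))

/-! ## LU bounds -/

def lowerConstAt {X : Type} [DecidableEq X] (x : X) : Constr X → WithBot ℕ
  | .lower c _ y => if y = x then (c : WithBot ℕ) else ⊥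
  | _ => ⊥

def upperConstAt {X : Type} [DecidableEq X] (x : X) : Constr X → WithBot ℕ
  | .upper y _ c => if y = x then (c : WithBot ℕ) else ⊥
  | _ => ⊥

/-- `L_G(x)`: maximum constant among lower-bound constraints `c ◁ x` in `G`
(`⊥ = -∞` if none). -/
def Lbound {X : Type} [DecidableEq X] (G : Finset (Constr X)) (x : X) : WithBot ℕ :=
  G.sup (lowerConstAt x)

/-- `U_G(x)`: maximum constant among upper-bound constraints `x ◁ c` in `G`
(`⊥ = -∞` if none). -/
def Ubound {X : Type} [DecidableEq X] (G : Finset (Constr X)) (x : X) : WithBot ℕ :=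
  G.sup (upperConstAt x)

/-- The LU simulation `v ≼_LU v'` for bounds functions `L U : X → ℕ ∪ {-∞}`. -/
def luSim {X : Type} (L U : X → WithBot ℕ) (v v' : X → ℝ≥0) : Prop :=
  ∀ x : X,
    (v' x < v x → (L x).map (fun c : ℕ => (c : ℝ)) < ((v' x : ℝ) : WithBot ℝ)) ∧
    (v x < v' x → (U x).map (fun c : ℕ => (c : ℝ)) < ((v x : ℝ) : WithBot ℝ))

/-- The relation `v ⊑^LU_G v'`: `v ≼_{LU(G)} v'` and every diagonal constraint
of `G` satisfied by `v` is satisfied by `v'`. -/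
def luglu {X : Type} [DecidableEq X] (G : Finset (Constr X)) (v v' : X → ℝ≥0) : Prop :=
  luSim (Lbound G) (Ubound G) v v' ∧
    ∀ φ ∈ G, φ.isDiag → Constr.sat v φ → Constr.sat v' φ

/-- Lifting a relation on valuations to sets of valuations. -/
def zoneRel {X : Type} (r : (X → ℝ≥0) → (X → ℝ≥0) → Prop) (Z Z' : Set (X → ℝ≥0)) : Prop :=
  ∀ v ∈ Z, ∃ v' ∈ Z', r v v'

/-! ## Runs of timed automata -/

/-- `stepsFrom A c l`: the alternating delay-action sequence `l` is a valid
sequence of steps of `A` starting at configuration `c`. -/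
def stepsFrom {Q X : Type} (A : TA Q X) :
    (Q × (X → ℝ≥0)) → List (ℝ≥0 × TTrans Q X) → Prop
  | _, [] => True
  | c, (δ, t) :: l =>
      t ∈ A.trans ∧ TTrans.src t = c.1 ∧
      (∀ φ ∈ TTrans.grd t, Constr.sat (shift c.2 δ) φ) ∧
      stepsFrom A (TTrans.tgt t, reset (TTrans.rst t) (shift c.2 δ)) l

/-- Configuration reached after a sequence of delay-action steps. -/
noncomputable def endConfig {Q X : Type} :
    (Q × (X → ℝ≥0)) → List (ℝ≥0 × TTrans Q X) → (Q × (X → ℝ≥0))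
  | c, [] => c
  | c, (δ, t) :: l => endConfig (TTrans.tgt t, reset (TTrans.rst t) (shift c.2 δ)) l

/-- A run of `A`: a valid sequence of delay-action steps from `(q₀, 0̄)`. -/
def TA.Run {Q X : Type} (A : TA Q X) : Type :=
  {l : List (ℝ≥0 × TTrans Q X) // stepsFrom A (A.init, fun _ => 0) l}

/-- A run is accepting if it ends in an accepting state. -/
def TA.Accepting {Q X : Type} (A : TA Q X) (r : A.Run) : Prop :=
  (endConfig (A.init, fun _ => 0) r.val).1 ∈ A.acc

/-- `A` is diagonal-free: no guard contains a diagonal constraint. -/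
def DiagFree {Q X : Type} (A : TA Q X) : Prop :=
  ∀ t ∈ A.trans, ∀ φ ∈ TTrans.grd t, ¬ φ.isDiag

/-- The (finite) set of diagonal constraints occurring in guards of `A`. -/
def diagGuards {Q X : Type} [DecidableEq X] (A : TA Q X) : Finset (Constr X) :=
  A.trans.biUnion fun t => (TTrans.grd t).filter fun φ => φ.isDiag

/-! ## Updateable timed automata -/

/-- Atomic update of a clock: `x := c` or `x := y + d`. -/
inductive AtomicUp (X : Type) : Type where
  | const : ℕ → AtomicUp X
  | add : X → ℤ → AtomicUp X
deriving DecidableEq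

/-- `up(v) : X → ℝ` (may be negative). -/
def applyUpd {X : Type} (up : X → AtomicUp X) (v : X → ℝ≥0) : X → ℝ :=
  fun x => match up x with
    | .const c => (c : ℝ)
    | .add y d => (v y : ℝ) + (d : ℝ)

/-- Weakest precondition `wp(⊑_φ, up)` of a single constraint over an update. -/
def wpUpd {X : Type} [DecidableEq X] (up : X → AtomicUp X) : Constr X → Set (Constr X)
  | .upper x o c =>
      match up x with
      | .const _ => ∅
      | .add y d => if 0 ≤ (c : ℤ) - d then {Constr.upper y o ((c : ℤ) - d).toNat} else ∅
  | .lower c o x =>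
      match up x with
      | .const _ => ∅
      | .add y d => if 0 ≤ (c : ℤ) - d then {Constr.lower ((c : ℤ) - d).toNat o y} else ∅
  | .diag x y o c =>
      match up x, up y with
      | .const _, .const _ => ∅
      | .add y₁ d₁, .const c₂ =>
          if 0 ≤ c + (c₂ : ℤ) - d₁ then {Constr.upper y₁ o (c + (c₂ : ℤ) - d₁).toNat} else ∅
      | .const c₁, .add y₂ d₂ =>
          if 0 ≤ (c₁ : ℤ) - d₂ - c then {Constr.lower ((c₁ : ℤ) - d₂ - c).toNat o y₂} else ∅
      | .add y₁ d₁, .add y₂ d₂ =>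
          if y₁ = y₂ then ∅ else {Constr.diag y₁ y₂ o (c - d₁ + d₂)}

/-- Weakest precondition `wp(⊑_G, up)` of a set of constraints over an update. -/
def wpUpdSet {X : Type} [DecidableEq X] (up : X → AtomicUp X) (G : Set (Constr X)) :
    Set (Constr X) :=
  ⋃ φ ∈ G, wpUpd up φ

/-- The set of constraints `{0 ≤ x | x ∈ X}`. -/
def nonnegConstrs (X : Type) : Set (Constr X) := {φ | ∃ x : X, φ = Constr.lower 0 Ineq.le x}

/-- A transition of an updateable timed automaton: source, guard, update, target. -/
abbrev UTrans (Q X : Type) : Type := Q × Finset (Constr X) × (X → AtomicUp X) × Q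

def UTrans.src {Q X : Type} (t : UTrans Q X) : Q := t.1
def UTrans.grd {Q X : Type} (t : UTrans Q X) : Finset (Constr X) := t.2.1
def UTrans.upd {Q X : Type} (t : UTrans Q X) : X → AtomicUp X := t.2.2.1
def UTrans.tgt {Q X : Type} (t : UTrans Q X) : Q := t.2.2.2

/-- An updateable timed automaton. -/
structure UTA (Q X : Type) : Type where
  init : Q
  trans : Finset (UTrans Q X)
  acc : Set Q

/-- Action step of an updateable timed automaton along transition `t`:
the guard holds, `up(v) ≥ 0`, and the new valuation is `up(v)`. -/
def UStep {Q X : Type} (A : UTA Q X) (t : UTrans Q X) (c c' : Q × (X → ℝ≥0)) : Prop :=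
  t ∈ A.trans ∧ UTrans.src t = c.1 ∧ (∀ φ ∈ UTrans.grd t, Constr.sat c.2 φ) ∧
    c'.1 = UTrans.tgt t ∧ ∀ x, (c'.2 x : ℝ) = applyUpd (UTrans.upd t) c.2 x

/-- `r` is a simulation on configurations of an updateable timed automaton. -/
def IsSimulationU {Q X : Type} (A : UTA Q X)
    (r : (Q × (X → ℝ≥0)) → (Q × (X → ℝ≥0)) → Prop) : Prop :=
  Reflexive r ∧ Transitive r ∧
  ∀ q v q' v', r (q, v) (q', v') →
    q = q' ∧
    (∀ δ : ℝ≥0, ∃ δ' : ℝ≥0, r (q, shift v δ) (q, shift v' δ')) ∧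
    (∀ t c₁, UStep A t (q, v) c₁ →
      ∃ v₁', UStep A t (q, v') (c₁.1, v₁') ∧ r c₁ (c₁.1, v₁'))

/-- State-based guard equations for updateable timed automata. -/
def GuardEqU {Q X : Type} [DecidableEq X] (A : UTA Q X) (G : Q → Set (Constr X)) : Prop :=
  ∀ q, G q = ⋃ t ∈ A.trans, ⋃ (_ : UTrans.src t = q),
    ((UTrans.grd t : Set (Constr X)) ∪ wpUpdSet (UTrans.upd t) (nonnegConstrs X)
      ∪ wpUpdSet (UTrans.upd t) (G (UTrans.tgt t)))

/-- Kleene iterates `G^i(q)` of the state-based guard equations. -/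
def iterG {Q X : Type} [DecidableEq X] (A : UTA Q X) : ℕ → Q → Set (Constr X)
  | 0 => fun q => ⋃ t ∈ A.trans, ⋃ (_ : UTrans.src t = q),
      ((UTrans.grd t : Set (Constr X)) ∪ wpUpdSet (UTrans.upd t) (nonnegConstrs X))
  | (i + 1) => fun q => iterG A i q ∪
      (⋃ t ∈ A.trans, ⋃ (_ : UTrans.src t = q),
        wpUpdSet (UTrans.upd t) (iterG A i (UTrans.tgt t)))

/-- `G^{i+1}(q)` is coloured red: a new diagonal constraint was added, or a new
non-diagonal constraint whose constant is strictly bigger than the constant of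
every non-diagonal constraint of the same kind on the same clock in `G^i(q)`. -/
def RedAt {Q X : Type} [DecidableEq X] (A : UTA Q X) : ℕ → Q → Prop
  | 0, _ => False
  | (i + 1), q =>
      (∃ φ : Constr X, φ ∈ iterG A (i + 1) q ∧ φ ∉ iterG A i q ∧ φ.isDiag) ∨
      (∃ (x : X) (o : Ineq) (c : ℕ),
        Constr.upper x o c ∈ iterG A (i + 1) q ∧ Constr.upper x o c ∉ iterG A i q ∧
        ∀ (o' : Ineq) (c' : ℕ), Constr.upper x o' c' ∈ iterG A i q → c' < c) ∨
      (∃ (x : X) (o : Ineq) (c : ℕ),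
        Constr.lower c o x ∈ iterG A (i + 1) q ∧ Constr.lower c o x ∉ iterG A i q ∧
        ∀ (o' : Ineq) (c' : ℕ), Constr.lower c' o' x ∈ iterG A i q → c' < c)

/-- `G^i(q)` is coloured green. -/
def GreenAt {Q X : Type} [DecidableEq X] (A : UTA Q X) (i : ℕ) (q : Q) : Prop :=
  ¬ RedAt A i q

/-- Absolute value of the constant of an atomic update. -/
def updBound {X : Type} : AtomicUp X → ℕ
  | .const c => c
  | .add _ d => d.natAbs

/-!
Both `x ◁ k` and `k ◁ x` make sense for every integer `k`. When `k < 0`, nonnegative values never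
satisfy the first and always satisfy the second, so neither restricts `⊑` and `wp` may discard
them. Up to this, `wp(⊑_φ, up)` is `φ` with `up(x)` substituted for `x` and all constants moved to
one side, which keeps its truth value because this depends only on the difference of the two sides.
For non-diagonal `φ`, delaying before or after `x := y + d` gives `x` the same value, so each delay
is handled by itself. For diagonal `φ` delays cancel, so `δ = 0` is the only one to consider.
If the substitution leaves no clock in `φ`, then after any delay `φ` holds for both of `up(v)`,
`up(v')` or for neither.
-/

namespace Ineq

variable {o : Ineq} {a b a' b' : ℝ}

theorem holds_congr_of_sub_eq (h : a - b = a' - b') : o.holds a b ↔ o.holds a' b' := by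
  cases o
  · rw [holds, holds, ← sub_neg, h, sub_neg]
  · rw [holds, holds, ← sub_nonpos, h, sub_nonpos]

theorem holds_of_lt (h : a < b) : o.holds a b := by
  cases o
  exacts [h, h.le]

theorem not_holds_of_lt (h : b < a) : ¬ o.holds a b := by
  cases o
  exacts [h.not_gt, h.not_ge]

end Ineq

section Simulation

variable {X : Type} {o : Ineq} {x y : X} {v v' : X → ℝ≥0}

theorem simG_empty : simG ∅ v v' :=
  fun _ hφ => hφ.elim

theorem simG_singleton_iff {φ : Constr X} :
    simG {φ} v v' ↔ ∀ δ : ℝ≥0, Constr.sat (shift v δ) φ → Constr.sat (shift v' δ) φ :=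
  forall_eq

theorem simG_iff_forall_singleton {G : Set (Constr X)} :
    simG G v v' ↔ ∀ φ ∈ G, simG {φ} v v' :=
  forall₂_congr fun _ _ => simG_singleton_iff.symm

theorem simG_singleton_upper_iff {c : ℕ} :
    simG {.upper x o c} v v' ↔ ∀ δ : ℝ≥0, o.holds (v x + δ) c → o.holds (v' x + δ) c := by
  simp only [simG_singleton_iff, Constr.sat, shift, NNReal.coe_add]

theorem simG_singleton_lower_iff {c : ℕ} :
    simG {.lower c o x} v v' ↔ ∀ δ : ℝ≥0, o.holds c (v x + δ) → o.holds c (v' x + δ) := by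
  simp only [simG_singleton_iff, Constr.sat, shift, NNReal.coe_add]

theorem simG_singleton_diag_iff {d : ℤ} :
    simG {.diag x y o d} v v' ↔ (o.holds (v x - v y) d → o.holds (v' x - v' y) d) := by
  simp only [simG_singleton_iff, Constr.sat, shift, NNReal.coe_add, add_sub_add_right_eq_sub,
    forall_const]

namespace Constr

/-- The constraint `x ◁ k` with an integer bound, as a set of atomic constraints: empty when
`k < 0`, since the bound of an atomic constraint `x ◁ c` is a natural number. -/
def upperOfInt (x : X) (o : Ineq) (k : ℤ) : Set (Constr X) :=
  if 0 ≤ k then {.upper x o k.toNat} else ∅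

/-- The constraint `k ◁ x` with an integer bound, as a set of atomic constraints: empty when
`k < 0`, since the bound of an atomic constraint `c ◁ x` is a natural number. -/
def lowerOfInt (k : ℤ) (o : Ineq) (x : X) : Set (Constr X) :=
  if 0 ≤ k then {.lower k.toNat o x} else ∅

end Constr

theorem simG_upperOfInt_iff {k : ℤ} :
    simG (Constr.upperOfInt x o k) v v' ↔
      ∀ δ : ℝ≥0, o.holds (v x + δ) k → o.holds (v' x + δ) k := by
  rcases le_or_gt 0 k with hk | hk
  · lift k to ℕ using hk
    simp only [Constr.upperOfInt, Int.natCast_nonneg, if_true, Int.toNat_natCast,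
      simG_singleton_upper_iff, Int.cast_natCast]
  · have never_holds (δ : ℝ≥0) : ¬ o.holds (v x + δ) k :=
      Ineq.not_holds_of_lt ((Int.cast_lt_zero.mpr hk).trans_le (by positivity))
    simp only [Constr.upperOfInt, hk.not_ge, if_false, simG_empty, never_holds, false_imp_iff,
      forall_const]

theorem simG_lowerOfInt_iff {k : ℤ} :
    simG (Constr.lowerOfInt k o x) v v' ↔
      ∀ δ : ℝ≥0, o.holds k (v x + δ) → o.holds k (v' x + δ) := by
  rcases le_or_gt 0 k with hk | hk
  · lift k to ℕ using hk
    simp only [Constr.lowerOfInt, Int.natCast_nonneg, if_true, Int.toNat_natCast,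
      simG_singleton_lower_iff, Int.cast_natCast]
  · have always_holds (δ : ℝ≥0) : o.holds k (v' x + δ) :=
      Ineq.holds_of_lt ((Int.cast_lt_zero.mpr hk).trans_le (by positivity))
    simp only [Constr.lowerOfInt, hk.not_ge, if_false, simG_empty, always_holds, implies_true]

end Simulation

section Update

variable {X : Type} {up : X → AtomicUp X} {v v' v₁ v₁' : X → ℝ≥0} {x y z w : X} {o : Ineq}

theorem applyUpd_of_const {k : ℕ} (hx : up x = .const k) : applyUpd up v x = k := by
  simp only [applyUpd, hx]

theorem applyUpd_of_add {d : ℤ} (hx : up x = .add z d) : applyUpd up v x = v z + d := by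
  simp only [applyUpd, hx]

variable [DecidableEq X]

theorem wpUpd_upper_of_add {c : ℕ} {d : ℤ} (hx : up x = .add z d) :
    wpUpd up (.upper x o c) = Constr.upperOfInt z o (c - d) := by
  simp only [wpUpd, hx, Constr.upperOfInt]

theorem wpUpd_lower_of_add {c : ℕ} {d : ℤ} (hx : up x = .add z d) :
    wpUpd up (.lower c o x) = Constr.lowerOfInt (c - d) o z := by
  simp only [wpUpd, hx, Constr.lowerOfInt]

theorem wpUpd_diag_of_add_const {c d : ℤ} {k : ℕ} (hx : up x = .add z d) (hy : up y = .const k) :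
    wpUpd up (.diag x y o c) = Constr.upperOfInt z o (c + k - d) := by
  simp only [wpUpd, hx, hy, Constr.upperOfInt]

theorem wpUpd_diag_of_const_add {c d : ℤ} {k : ℕ} (hx : up x = .const k) (hy : up y = .add w d) :
    wpUpd up (.diag x y o c) = Constr.lowerOfInt (k - d - c) o w := by
  simp only [wpUpd, hx, hy, Constr.lowerOfInt]

theorem wpUpd_diag_of_add_add {c d e : ℤ} (hx : up x = .add z d) (hy : up y = .add w e)
    (hzw : z ≠ w) : wpUpd up (.diag x y o c) = {.diag z w o (c - d + e)} := by
  simp only [wpUpd, hx, hy, if_neg hzw]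

theorem simG_wpUpdSet_iff {G : Set (Constr X)} :
    simG (wpUpdSet up G) v v' ↔ ∀ φ ∈ G, simG (wpUpd up φ) v v' :=
  -- `simG G v v'` is by definition an inclusion `G ⊆ {φ | …}`.
  Set.iUnion₂_subset_iff

theorem simG_upper_of_wpUpd {c : ℕ} (hv : ∀ x, (v₁ x : ℝ) = applyUpd up v x)
    (hv' : ∀ x, (v₁' x : ℝ) = applyUpd up v' x) (h : simG (wpUpd up (.upper x o c)) v v') :
    simG {.upper x o c} v₁ v₁' := by
  simp only [simG_singleton_upper_iff, hv, hv']
  cases hx : up x with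
  | const k =>
    simp only [applyUpd_of_const hx, imp_self, implies_true]
  | add z d =>
    rw [wpUpd_upper_of_add hx, simG_upperOfInt_iff] at h
    have move_const (a δ : ℝ) : o.holds (a + d + δ) c ↔ o.holds (a + δ) (c - d : ℤ) :=
      Ineq.holds_congr_of_sub_eq (by push_cast; ring)
    simpa only [applyUpd_of_add hx, move_const] using h

theorem simG_lower_of_wpUpd {c : ℕ} (hv : ∀ x, (v₁ x : ℝ) = applyUpd up v x)
    (hv' : ∀ x, (v₁' x : ℝ) = applyUpd up v' x) (h : simG (wpUpd up (.lower c o x)) v v') :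
    simG {.lower c o x} v₁ v₁' := by
  simp only [simG_singleton_lower_iff, hv, hv']
  cases hx : up x with
  | const k =>
    simp only [applyUpd_of_const hx, imp_self, implies_true]
  | add z d =>
    rw [wpUpd_lower_of_add hx, simG_lowerOfInt_iff] at h
    have move_const (a δ : ℝ) : o.holds c (a + d + δ) ↔ o.holds (c - d : ℤ) (a + δ) :=
      Ineq.holds_congr_of_sub_eq (by push_cast; ring)
    simpa only [applyUpd_of_add hx, move_const] using h

theorem simG_diag_of_wpUpd {c : ℤ} (hv : ∀ x, (v₁ x : ℝ) = applyUpd up v x)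
    (hv' : ∀ x, (v₁' x : ℝ) = applyUpd up v' x) (h : simG (wpUpd up (.diag x y o c)) v v') :
    simG {.diag x y o c} v₁ v₁' := by
  simp only [simG_singleton_diag_iff, hv, hv']
  cases hx : up x with
  | const k =>
    cases hy : up y with
    | const l =>
      simp only [applyUpd_of_const hx, applyUpd_of_const hy, imp_self]
    | add w e =>
      rw [wpUpd_diag_of_const_add hx hy, simG_lowerOfInt_iff] at h
      have move_const (b : ℝ) : o.holds (k - (b + e)) c ↔ o.holds (k - e - c : ℤ) (b + (0 : ℝ≥0)) :=
        Ineq.holds_congr_of_sub_eq (by push_cast; ring)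
      simpa only [applyUpd_of_const hx, applyUpd_of_add hy, move_const] using h 0
  | add z d =>
    cases hy : up y with
    | const l =>
      rw [wpUpd_diag_of_add_const hx hy, simG_upperOfInt_iff] at h
      have move_const (a : ℝ) : o.holds (a + d - l) c ↔ o.holds (a + (0 : ℝ≥0)) (c + l - d : ℤ) :=
        Ineq.holds_congr_of_sub_eq (by push_cast; ring)
      simpa only [applyUpd_of_add hx, applyUpd_of_const hy, move_const] using h 0
    | add w e =>
      rcases eq_or_ne z w with rfl | hzw
      · simp only [applyUpd_of_add hx, applyUpd_of_add hy, add_sub_add_left_eq_sub, imp_self]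
      · rw [wpUpd_diag_of_add_add hx hy hzw, simG_singleton_diag_iff] at h
        have move_const (a b : ℝ) :
            o.holds (a + d - (b + e)) c ↔ o.holds (a - b) (c - d + e : ℤ) :=
          Ineq.holds_congr_of_sub_eq (by push_cast; ring)
        simpa only [applyUpd_of_add hx, applyUpd_of_add hy, move_const] using h

end Update

theorem stmt11_general {X : Type} [DecidableEq X] (up : X → AtomicUp X)
    (G : Set (Constr X)) (v v' v₁ v₁' : X → ℝ≥0)
    (hv : ∀ x, (v₁ x : ℝ) = applyUpd up v x)
    (hv' : ∀ x, (v₁' x : ℝ) = applyUpd up v' x)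
    (h : simG (wpUpdSet up G) v v') : simG G v₁ v₁' := by
  rw [simG_wpUpdSet_iff] at h
  rw [simG_iff_forall_singleton]
  intro φ hφ
  cases φ with
  | upper x o c => exact simG_upper_of_wpUpd hv hv' (h _ hφ)
  | lower c o x => exact simG_lower_of_wpUpd hv hv' (h _ hφ)
  | diag x y o c => exact simG_diag_of_wpUpd hv hv' (h _ hφ)

/-! ## The statement -/

theorem stmt11 {X : Type} [Fintype X] [DecidableEq X] (up : X → AtomicUp X)
    (G : Set (Constr X)) (v v' v₁ v₁' : X → ℝ≥0)
    (hv : ∀ x, (v₁ x : ℝ) = applyUpd up v x)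
    (hv' : ∀ x, (v₁' x : ℝ) = applyUpd up v' x)
    (h : simG (wpUpdSet up G) v v') : simG G v₁ v₁' :=
  stmt11_general up G v v' v₁ v₁' hv hv' h
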